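/- Let L : (0,∞) → (0,∞) be measurable and slowly varying, and let 0 < D < 1. Then Σ_{i=1}^{n} Σ_{j=1, j≠i}^{n} |i−j|^{−D} L(|i−j|) is asymptotically equivalent to (2/((1−D)(2−D))) · n^{2−D} L(n), i.e. the ratio of the two sides tends to 1 as n → ∞. -/

import Mathlib

open Filter Finset

open MeasureTheory in
/-- If all increments `h (x + u) - h x` of a measurable function vanish as `x → ∞`, then the set of
`u` in a bounded interval whose increment is not small has vanishing measure. -/
lemma tendsto_volume_increment_ge (h : ℝ → ℝ) (hm : Measurable h)
    (hh : ∀ u : ℝ, Tendsto (fun x => h (x + u) - h x) atTop (nhds 0)) (b ε : ℝ) (hε : 0 < ε) :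
    Tendsto (fun x => volume (Set.Icc 0 b ∩ {u | ε ≤ |h (x + u) - h x|})) atTop (nhds 0) := by
  have key := tendsto_measure_of_tendsto_indicator (μ := volume) (A := (∅ : Set ℝ))
    (As := fun x : ℝ => Set.Icc 0 b ∩ {u | ε ≤ |h (x + u) - h x|}) (B := Set.Icc 0 b) atTop
    (fun x => measurableSet_Icc.inter (measurableSet_le measurable_const (by fun_prop)))
    measurableSet_Icc (by simp) (Eventually.of_forall fun x => Set.inter_subset_left) (by
      intro u
      have h1 := (hh u).abs
      rw [abs_zero] at h1
      filter_upwards [h1.eventually_lt_const hε] with x hx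
      simp [hx])
  simpa using key

open MeasureTheory in
/-- The uniform convergence theorem for slowly varying functions, in additive form. -/
lemma exists_forall_abs_increment_lt (h : ℝ → ℝ) (hm : Measurable h)
    (hh : ∀ u : ℝ, Tendsto (fun x => h (x + u) - h x) atTop (nhds 0)) (ε : ℝ) (hε : 0 < ε) :
    ∃ X : ℝ, ∀ x ≥ X, ∀ u ∈ Set.Icc (0 : ℝ) 1, |h (x + u) - h x| < ε := by
  have h2 : (0 : ENNReal) < 1 / 2 := by simp
  have ev := (tendsto_volume_increment_ge h hm hh 2 (ε / 2) (by linarith)).eventually_lt_const h2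
  obtain ⟨X, hX⟩ := eventually_atTop.1 ev
  refine ⟨X, fun x hx u hu => ?_⟩
  set A := Set.Icc 0 2 ∩ {v | ε / 2 ≤ |h (x + v) - h x|} with hA
  set B := Set.Icc 0 2 ∩ {v | ε / 2 ≤ |h (x + u + v) - h (x + u)|} with hB
  have hAv : volume A < 1 / 2 := hX x hx
  have hBv : volume B < 1 / 2 := hX (x + u) (by linarith [hu.1])
  have hpre : volume ((fun v => u + v) ⁻¹' A) < 1 / 2 := by
    rwa [measure_preimage_add]
  have hlt : volume ((fun v => u + v) ⁻¹' A ∪ B) < 1 := by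
    calc _ ≤ volume ((fun v => u + v) ⁻¹' A) + volume B := measure_union_le _ _
      _ < 1 / 2 + 1 / 2 := ENNReal.add_lt_add hpre hBv
      _ = 1 := ENNReal.add_halves 1
  have hns : ¬ Set.Icc (0 : ℝ) 1 ⊆ (fun v => u + v) ⁻¹' A ∪ B := by
    intro hs
    have := measure_mono (μ := volume) hs
    rw [Real.volume_Icc] at this
    simp only [sub_zero, ENNReal.ofReal_one] at this
    exact absurd hlt (not_lt.2 this)
  obtain ⟨v, hv, hvn⟩ := Set.not_subset.1 hns
  obtain ⟨hu0, hu1⟩ := hu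
  obtain ⟨hv0, hv1⟩ := hv
  simp only [Set.mem_union, not_or, Set.mem_preimage] at hvn
  have e1 : |h (x + (u + v)) - h x| < ε / 2 := by
    by_contra hc
    exact hvn.1 ⟨⟨by linarith, by linarith⟩, not_lt.1 hc⟩
  have e2 : |h (x + u + v) - h (x + u)| < ε / 2 := by
    by_contra hc
    exact hvn.2 ⟨⟨by linarith, by linarith⟩, not_lt.1 hc⟩
  rw [← add_assoc] at e1
  rw [abs_lt] at *
  constructor <;> linarith [e1.1, e1.2, e2.1, e2.2]

/-- A bound on unit increments gives a linear bound on all increments. -/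
lemma abs_sub_le_of_unit_increments (h : ℝ → ℝ) (δ X : ℝ) (hδ : 0 < δ)
    (hX : ∀ x ≥ X, ∀ u ∈ Set.Icc (0 : ℝ) 1, |h (x + u) - h x| < δ)
    (x y : ℝ) (hx : X ≤ x) (hxy : x ≤ y) : |h y - h x| ≤ δ * (y - x) + δ := by
  have step : ∀ n : ℕ, |h (x + n) - h x| ≤ δ * n := by
    intro n
    induction n with
    | zero => simp
    | succ n ih =>
      have h1 := hX (x + n) (by linarith [(Nat.cast_nonneg n : (0 : ℝ) ≤ n)]) 1 (by simp)
      have h2 := abs_sub_le (h (x + n + 1)) (h (x + n)) (h x)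
      push_cast
      rw [← add_assoc]
      linarith
  have hn0 : 0 ≤ y - x := by linarith
  have h1 := Nat.floor_le hn0
  have h2 := Nat.lt_floor_add_one (y - x)
  have h3 := step ⌊y - x⌋₊
  have h4 := hX (x + ⌊y - x⌋₊) (by linarith [(Nat.cast_nonneg ⌊y - x⌋₊ : (0 : ℝ) ≤ _)])
    (y - x - ⌊y - x⌋₊) ⟨by linarith, by linarith⟩
  rw [show x + ⌊y - x⌋₊ + (y - x - ⌊y - x⌋₊) = y by ring] at h4
  have h5 := abs_sub_le (h y) (h (x + ⌊y - x⌋₊)) (h x)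
  nlinarith

lemma tendsto_log_comp_exp_increment (L : ℝ → ℝ) (hLpos : ∀ x > (0:ℝ), 0 < L x)
    (hLsv : ∀ a > (0:ℝ), Tendsto (fun x => L (a * x) / L x) atTop (nhds 1))
    (u : ℝ) :
    Tendsto (fun x => Real.log (L (Real.exp (x + u))) - Real.log (L (Real.exp x)))
      atTop (nhds 0) := by
  have h1 := (hLsv (Real.exp u) (Real.exp_pos u)).comp Real.tendsto_exp_atTop
  have h2 := h1.log one_ne_zero
  rw [Real.log_one] at h2
  refine h2.congr fun x => ?_
  have p1 := hLpos (Real.exp u * Real.exp x) (by positivity)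
  have p2 := hLpos (Real.exp x) (by positivity)
  simp only [Function.comp]
  rw [Real.log_div p1.ne' p2.ne', Real.exp_add, mul_comm]

/-- Potter's bound for arguments that are both large. -/
lemma exists_div_le_rpow (L : ℝ → ℝ) (hLpos : ∀ x > (0:ℝ), 0 < L x)
    (hLmeas : Measurable L)
    (hLsv : ∀ a > (0:ℝ), Tendsto (fun x => L (a * x) / L x) atTop (nhds 1))
    (δ : ℝ) (hδ : 0 < δ) :
    ∃ X > (0 : ℝ), ∀ x y : ℝ, X ≤ x → x ≤ y → L x / L y ≤ Real.exp δ * (y / x) ^ δ := by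
  obtain ⟨X, hX⟩ := exists_forall_abs_increment_lt (fun x => Real.log (L (Real.exp x)))
    (by fun_prop) (tendsto_log_comp_exp_increment L hLpos hLsv) δ hδ
  refine ⟨Real.exp X, Real.exp_pos X, fun x y hx hxy => ?_⟩
  have x0 : 0 < x := (Real.exp_pos X).trans_le hx
  have y0 : 0 < y := x0.trans_le hxy
  have h1 := abs_sub_le_of_unit_increments (fun x => Real.log (L (Real.exp x))) δ X hδ hX (Real.log x) (Real.log y)
    ((Real.le_log_iff_exp_le x0).2 hx) (Real.log_le_log x0 hxy)
  simp only [Real.exp_log x0, Real.exp_log y0] at h1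
  have hd : 0 < L x / L y := div_pos (hLpos x x0) (hLpos y y0)
  rw [Real.rpow_def_of_pos (div_pos y0 x0), ← Real.exp_add, ← Real.log_le_iff_le_exp hd,
    Real.log_div (hLpos x x0).ne' (hLpos y y0).ne', Real.log_div y0.ne' x0.ne']
  linarith [(abs_le.1 h1).1]

/-- Potter's bound along the positive integers. -/
lemma exists_nat_div_le_rpow (L : ℝ → ℝ) (hLpos : ∀ x > (0:ℝ), 0 < L x)
    (hLmeas : Measurable L)
    (hLsv : ∀ a > (0:ℝ), Tendsto (fun x => L (a * x) / L x) atTop (nhds 1))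
    (δ : ℝ) (hδ : 0 < δ) :
    ∃ C > (0 : ℝ), ∃ N : ℕ, ∀ n ≥ N, ∀ k : ℕ, 1 ≤ k → k ≤ n →
      L k / L n ≤ C * ((n : ℝ) / k) ^ δ := by
  obtain ⟨X, hX0, hX⟩ := exists_div_le_rpow L hLpos hLmeas hLsv δ hδ
  obtain ⟨N, hN⟩ := exists_nat_ge X
  have hN0 : (0 : ℝ) < N := hX0.trans_le hN
  have hLN := hLpos N hN0
  set M : ℝ := 1 + ∑ k ∈ Finset.Icc 1 N, L k / L N with hM
  have hterm : ∀ k ∈ Finset.Icc 1 N, 0 ≤ L k / L N := fun k hk =>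
    div_nonneg (hLpos k (by exact_mod_cast (Finset.mem_Icc.1 hk).1)).le hLN.le
  have hM1 : 1 ≤ M := by linarith [Finset.sum_nonneg hterm]
  have hM0 : 0 < M := by linarith
  refine ⟨M * Real.exp δ, by positivity, N, fun n hn k hk1 hkn => ?_⟩
  have hk0 : (0 : ℝ) < k := by exact_mod_cast hk1
  have hn' : (N : ℝ) ≤ n := by exact_mod_cast hn
  have hkn' : (k : ℝ) ≤ n := by exact_mod_cast hkn
  have hn0 : (0 : ℝ) < n := hk0.trans_le hkn'
  rcases le_total N k with h | h
  · have h' : (N : ℝ) ≤ k := by exact_mod_cast h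
    have h1 := hX k n (hN.trans h') hkn'
    have h2 : 0 ≤ Real.exp δ * ((n : ℝ) / k) ^ δ := by positivity
    nlinarith
  · have h' : (k : ℝ) ≤ N := by exact_mod_cast h
    have h1 := hX N n hN hn'
    have h2 : L k / L N ≤ M := by
      have := Finset.single_le_sum hterm (Finset.mem_Icc.2 ⟨hk1, h⟩)
      linarith
    have h3 : ((n : ℝ) / N) ^ δ ≤ ((n : ℝ) / k) ^ δ := by gcongr
    have hLn := hLpos n hn0
    calc L k / L n = (L k / L N) * (L N / L n) := by field_simp
      _ ≤ M * (Real.exp δ * ((n : ℝ) / k) ^ δ) := by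
        apply mul_le_mul h2 _ (by positivity) hM0.le
        exact h1.trans (by gcongr)
      _ = _ := by ring

lemma tendsto_ceil_mul_div (L : ℝ → ℝ) (hLpos : ∀ x > (0:ℝ), 0 < L x)
    (hLmeas : Measurable L)
    (hLsv : ∀ a > (0:ℝ), Tendsto (fun x => L (a * x) / L x) atTop (nhds 1))
    (t : ℝ) (ht : 0 < t) :
    Tendsto (fun n : ℕ => L (⌈t * n⌉₊ : ℝ) / L n) atTop (nhds 1) := by
  have hn : Tendsto (fun n : ℕ => (n : ℝ)) atTop atTop := tendsto_natCast_atTop_atTop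
  have htn : Tendsto (fun n : ℕ => t * (n : ℝ)) atTop atTop := hn.const_mul_atTop ht
  have hlog : Tendsto (fun n : ℕ => Real.log (L (⌈t * n⌉₊ : ℝ)) - Real.log (L (t * n)))
      atTop (nhds 0) := by
    rw [Metric.tendsto_nhds]
    intro ε hε
    obtain ⟨X, hX⟩ := exists_forall_abs_increment_lt (fun x => Real.log (L (Real.exp x)))
      (by fun_prop) (tendsto_log_comp_exp_increment L hLpos hLsv) ε hε
    filter_upwards [htn.eventually_ge_atTop 1, htn.eventually_ge_atTop (Real.exp X)] with n h1 h2
    have p0 : 0 < t * (n : ℝ) := by linarith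
    have c1 := Nat.le_ceil (t * (n : ℝ))
    have c2 := Nat.ceil_lt_add_one p0.le
    have p1 : (0 : ℝ) < ⌈t * n⌉₊ := p0.trans_le c1
    have hle := Real.log_le_log p0 c1
    have hub : Real.log (⌈t * n⌉₊ : ℝ) - Real.log (t * n) ≤ 1 := by
      rw [← Real.log_div p1.ne' p0.ne']
      refine (Real.log_le_sub_one_of_pos (div_pos p1 p0)).trans ?_
      rw [sub_le_iff_le_add, div_le_iff₀ p0]
      linarith
    have := hX (Real.log (t * n)) ((Real.le_log_iff_exp_le p0).2 h2)
      (Real.log (⌈t * n⌉₊ : ℝ) - Real.log (t * n)) ⟨by linarith, hub⟩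
    simp only [add_sub_cancel, Real.exp_log p0, Real.exp_log p1] at this
    rwa [Real.dist_eq, sub_zero]
  have h3 := hlog.rexp
  rw [Real.exp_zero] at h3
  have h4 := h3.mul ((hLsv t ht).comp hn)
  rw [one_mul] at h4
  refine h4.congr' ?_
  filter_upwards [htn.eventually_gt_atTop 0, hn.eventually_gt_atTop 0] with n p0 pn
  have p1 : (0 : ℝ) < ⌈t * n⌉₊ := p0.trans_le (Nat.le_ceil _)
  have := hLpos _ p0
  have := hLpos _ pn
  have := hLpos _ p1
  simp only [Function.comp]
  rw [← Real.log_div (by positivity) (by positivity), Real.exp_log (by positivity)]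
  field_simp

lemma sum_abs_sub_eq (g : ℝ → ℝ) (hg : g 0 = 0) (n : ℕ) :
    ∑ i ∈ Finset.Icc 1 n, ∑ j ∈ Finset.Icc 1 n, g |(i : ℝ) - (j : ℝ)| =
      2 * ∑ k ∈ Finset.range n, ((n : ℝ) - ((k + 1 : ℕ) : ℝ)) * g ((k + 1 : ℕ) : ℝ) := by
  have refl_sum : ∀ n : ℕ, ∑ i ∈ Finset.Icc 1 n, g |(i : ℝ) - ((n + 1 : ℕ) : ℝ)| =
      ∑ k ∈ Finset.range n, g ((k + 1 : ℕ) : ℝ) := by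
    intro n
    refine Finset.sum_bij' (fun i _ => n - i) (fun k _ => n - k) ?_ ?_ ?_ ?_ ?_ <;>
      simp only [Finset.mem_Icc, Finset.mem_range] <;> try (intros; omega)
    intro i hi
    congr 1
    rw [abs_sub_comm, abs_of_nonneg (by push_cast; linarith [(Nat.cast_le (α := ℝ)).2 hi.2]),
      ← Nat.cast_sub (by omega)]
    congr 1
    omega
  induction n with
  | zero => simp
  | succ n ih =>
    have hsym : ∑ j ∈ Finset.Icc 1 n, g |((n + 1 : ℕ) : ℝ) - (j : ℝ)| =
        ∑ k ∈ Finset.range n, g ((k + 1 : ℕ) : ℝ) := by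
      rw [← refl_sum n]
      exact Finset.sum_congr rfl fun i _ => by rw [abs_sub_comm]
    simp only [Finset.sum_Icc_succ_top (Nat.le_add_left 1 n), Finset.sum_add_distrib]
    rw [ih, refl_sum n, hsym, sub_self, abs_zero, hg, Finset.sum_range_succ, sub_self, zero_mul,
      add_zero, add_zero, add_assoc, ← two_mul, ← mul_add, ← Finset.sum_add_distrib]
    congr 1
    refine Finset.sum_congr rfl fun k _ => ?_
    push_cast
    ring

open MeasureTheory in
lemma integral_comp_ceil_mul (g : ℕ → ℝ) (n : ℕ) (hn : 0 < n) :
    ∫ t in (0 : ℝ)..1, g ⌈t * n⌉₊ = (∑ k ∈ Finset.range n, g (k + 1)) / n := by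
  have hn0 : (n : ℝ) ≠ 0 := by positivity
  have hceil : ∀ k : ℕ, ∀ x ∈ Set.uIoc (k : ℝ) ((k + 1 : ℕ) : ℝ), g ⌈x⌉₊ = g (k + 1) := by
    intro k x hx
    rw [Set.uIoc_of_le (by simp)] at hx
    congr 1
    rw [Nat.ceil_eq_iff (by omega)]
    exact ⟨by simpa using hx.1, hx.2⟩
  have hint : ∀ k : ℕ, IntervalIntegrable (fun x : ℝ => g ⌈x⌉₊) volume k ((k + 1 : ℕ) : ℝ) :=
    fun k => (intervalIntegrable_const (c := g (k + 1))).congr fun x hx => (hceil k x hx).symm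
  have h1 := intervalIntegral.sum_integral_adjacent_intervals (f := fun x : ℝ => g ⌈x⌉₊)
    (μ := volume) (a := fun k : ℕ => (k : ℝ)) (n := n) (fun k _ => hint k)
  have h2 : ∀ k : ℕ, ∫ x in (k : ℝ)..((k + 1 : ℕ) : ℝ), g ⌈x⌉₊ = g (k + 1) := by
    intro k
    rw [intervalIntegral.integral_congr_ae (g := fun _ => g (k + 1))
      (Eventually.of_forall (hceil k))]
    simp
  rw [intervalIntegral.integral_comp_mul_right (fun x => g ⌈x⌉₊) hn0]
  simp only [h2] at h1
  rw [zero_mul, one_mul, h1]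
  simp [div_eq_inv_mul]

lemma integral_one_sub_mul_rpow (D : ℝ) (hD1 : D < 1) :
    ∫ t in (0 : ℝ)..1, (1 - t) * t ^ (-D) = 1 / ((1 - D) * (2 - D)) := by
  have h1 : ∫ t in (0 : ℝ)..1, (1 - t) * t ^ (-D) =
      ∫ t in (0 : ℝ)..1, (t ^ (-D) - t ^ (1 - D)) := by
    refine intervalIntegral.integral_congr_ae (Eventually.of_forall fun t ht => ?_)
    rw [Set.uIoc_of_le zero_le_one] at ht
    rw [sub_eq_add_neg 1 D, Real.rpow_add ht.1, Real.rpow_one]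
    ring
  rw [h1, intervalIntegral.integral_sub
    (intervalIntegral.intervalIntegrable_rpow' (by linarith))
    (intervalIntegral.intervalIntegrable_rpow' (by linarith)),
    integral_rpow (Or.inl (by linarith)), integral_rpow (Or.inl (by linarith)),
    Real.one_rpow, Real.one_rpow, Real.zero_rpow (by linarith), Real.zero_rpow (by linarith)]
  have : 1 - D ≠ 0 := by linarith
  have : 2 - D ≠ 0 := by linarith
  rw [show -D + 1 = 1 - D by ring, show 1 - D + 1 = 2 - D by ring]
  field_simp
  ring

open MeasureTheory in
lemma tendsto_integral_ceil_weight (L : ℝ → ℝ) (hLpos : ∀ x > (0:ℝ), 0 < L x)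
    (hLmeas : Measurable L)
    (hLsv : ∀ a > (0:ℝ), Tendsto (fun x => L (a * x) / L x) atTop (nhds 1))
    (D : ℝ) (hD0 : 0 < D) (hD1 : D < 1) :
    Tendsto (fun n : ℕ => ∫ t in (0 : ℝ)..1, (1 - (⌈t * n⌉₊ : ℝ) / n) *
        ((⌈t * n⌉₊ : ℝ) / n) ^ (-D) * (L (⌈t * n⌉₊ : ℝ) / L n))
      atTop (nhds (1 / ((1 - D) * (2 - D)))) := by
  rw [← integral_one_sub_mul_rpow D hD1]
  set δ : ℝ := (1 - D) / 2 with hδ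
  have hδ0 : 0 < δ := by linarith
  obtain ⟨C, hC0, N, hC⟩ := exists_nat_div_le_rpow L hLpos hLmeas hLsv δ hδ0
  refine intervalIntegral.tendsto_integral_filter_of_dominated_convergence
    (fun t => C * t ^ (-(D + δ))) ?_ ?_ ?_ ?_
  · refine Eventually.of_forall fun n => Measurable.aestronglyMeasurable ?_
    fun_prop
  · filter_upwards [eventually_ge_atTop N, eventually_gt_atTop 0] with n hnN hn
    refine Eventually.of_forall fun t ht => ?_
    rw [Set.uIoc_of_le zero_le_one] at ht
    have hn0 : (0 : ℝ) < n := by exact_mod_cast hn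
    have p0 : 0 < t * (n : ℝ) := mul_pos ht.1 hn0
    have c1 := Nat.le_ceil (t * (n : ℝ))
    have c2 : ⌈t * (n : ℝ)⌉₊ ≤ n := Nat.ceil_le.2 (by nlinarith [ht.2])
    have c3 : 1 ≤ ⌈t * (n : ℝ)⌉₊ := Nat.ceil_pos.2 p0
    have hP := hC n hnN _ c3 c2
    set k := ⌈t * (n : ℝ)⌉₊ with hk
    have hk0 : (0 : ℝ) < k := by exact_mod_cast c3
    have hkn : (k : ℝ) ≤ n := by exact_mod_cast c2
    have q0 : (0 : ℝ) < k / n := by positivity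
    have q1 : (k : ℝ) / n ≤ 1 := (div_le_one hn0).2 hkn
    have qt : t ≤ (k : ℝ) / n := (le_div_iff₀ hn0).2 c1
    have hLr : 0 ≤ L k / L n := div_nonneg (hLpos k hk0).le (hLpos n hn0).le
    have hw : 0 ≤ 1 - (k : ℝ) / n := by linarith
    rw [Real.norm_of_nonneg (by positivity)]
    calc (1 - (k : ℝ) / n) * ((k : ℝ) / n) ^ (-D) * (L k / L n)
        ≤ 1 * ((k : ℝ) / n) ^ (-D) * (C * ((n : ℝ) / k) ^ δ) := by
          gcongr
          linarith
      _ = C * ((k : ℝ) / n) ^ (-(D + δ)) := by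
          rw [← inv_div (k : ℝ) n, Real.inv_rpow q0.le, ← Real.rpow_neg q0.le, neg_add,
            Real.rpow_add q0]
          ring
      _ ≤ C * t ^ (-(D + δ)) :=
          mul_le_mul_of_nonneg_left (Real.rpow_le_rpow_of_nonpos ht.1 qt (by linarith)) hC0.le
  · exact (intervalIntegral.intervalIntegrable_rpow' (by linarith)).const_mul C
  · refine Eventually.of_forall fun t ht => ?_
    rw [Set.uIoc_of_le zero_le_one] at ht
    have hq : Tendsto (fun n : ℕ => (⌈t * n⌉₊ : ℝ) / n) atTop (nhds t) :=
      (tendsto_nat_ceil_mul_div_atTop ht.1.le).comp tendsto_natCast_atTop_atTop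
    have h1 := ((hq.const_sub 1).mul (hq.rpow_const (p := -D) (Or.inl ht.1.ne'))).mul
      (tendsto_ceil_mul_div L hLpos hLmeas hLsv t ht.1)
    rwa [mul_one] at h1

/-- For a slowly varying `L` and `0 < D < 1`,
`Σ_{i=1}^n Σ_{j≠i} |i−j|^{−D} L(|i−j|) ∼ (2/((1−D)(2−D))) n^{2−D} L(n)`. -/
theorem stmt4 (L : ℝ → ℝ) (hLpos : ∀ x > (0:ℝ), 0 < L x)
    (hLmeas : Measurable L)
    (hLsv : ∀ a > (0:ℝ), Tendsto (fun x => L (a * x) / L x) atTop (nhds 1))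
    (D : ℝ) (hD0 : 0 < D) (hD1 : D < 1) :
    Tendsto
      (fun n : ℕ =>
        (∑ i ∈ Finset.Icc 1 n, ∑ j ∈ (Finset.Icc 1 n).erase i,
            |(i : ℝ) - (j : ℝ)| ^ (-D) * L |(i : ℝ) - (j : ℝ)|) /
          ((2 / ((1 - D) * (2 - D))) * (n : ℝ) ^ (2 - D) * L n))
      atTop (nhds 1) := by
  have hc : (0 : ℝ) < (1 - D) * (2 - D) := mul_pos (by linarith) (by linarith)
  have key := (tendsto_integral_ceil_weight L hLpos hLmeas hLsv D hD0 hD1).const_mul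
    ((1 - D) * (2 - D))
  rw [mul_one_div_cancel hc.ne'] at key
  refine key.congr' ?_
  filter_upwards [eventually_gt_atTop 0] with n hn
  have hn0 : (0 : ℝ) < n := by exact_mod_cast hn
  have hLn := hLpos n hn0
  have hsum : ∑ i ∈ Finset.Icc 1 n, ∑ j ∈ (Finset.Icc 1 n).erase i,
      |(i : ℝ) - (j : ℝ)| ^ (-D) * L |(i : ℝ) - (j : ℝ)| =
      2 * ∑ k ∈ Finset.range n, ((n : ℝ) - ((k + 1 : ℕ) : ℝ)) *
        (((k + 1 : ℕ) : ℝ) ^ (-D) * L ((k + 1 : ℕ) : ℝ)) := by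
    have h0 : (0 : ℝ) ^ (-D) * L 0 = 0 := by rw [Real.zero_rpow (by linarith), zero_mul]
    rw [← sum_abs_sub_eq (fun x => x ^ (-D) * L x) h0 n]
    exact Finset.sum_congr rfl fun i _ => Finset.sum_erase _ (by rw [sub_self, abs_zero, h0])
  rw [hsum, integral_comp_ceil_mul
    (fun k => (1 - (k : ℝ) / n) * ((k : ℝ) / n) ^ (-D) * (L k / L n)) n hn]
  have hpow : (n : ℝ) ^ (2 - D) = n ^ 2 * (n : ℝ) ^ (-D) := by
    rw [sub_eq_add_neg, Real.rpow_add hn0, Real.rpow_two]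
  have hnD : 0 < (n : ℝ) ^ (-D) := by positivity
  have hterm : ∑ k ∈ Finset.range n, (1 - ((k + 1 : ℕ) : ℝ) / n) *
      (((k + 1 : ℕ) : ℝ) / n) ^ (-D) * (L ((k + 1 : ℕ) : ℝ) / L n) =
      (∑ k ∈ Finset.range n, ((n : ℝ) - ((k + 1 : ℕ) : ℝ)) *
        (((k + 1 : ℕ) : ℝ) ^ (-D) * L ((k + 1 : ℕ) : ℝ))) / (n * (n : ℝ) ^ (-D) * L n) := by
    rw [Finset.sum_div]
    refine Finset.sum_congr rfl fun k _ => ?_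
    rw [Real.div_rpow (by positivity) hn0.le]
    field_simp
  rw [hterm, hpow]
  have : 1 - D ≠ 0 := by linarith
  have : 2 - D ≠ 0 := by linarith
  field_simp
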